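/- For the exponential compound Poisson subordinator with Φ(s) = s/(s+c), c > 0, the Mellin transforms of the perpetuity and remainder are I(r) = Γ(c+r)/Γ(c+1) and R(r) = Γ(c+1)Γ(r)/Γ(c+r) = c·B(r,c) for all r > 0; hence the perpetuity is a gamma variable of parameter c+1 and the remainder is a beta variable of parameters (1,c). -/

import Mathlib

open MeasureTheory Real Set

namespace ProbabilityTheory

open Filter Topology

/-- Webster's uniqueness theorem: a convex solution of `F (x + 1) = F x + g x` on `(0, ∞)` is
determined by its value at `1` as soon as `g (n + 1) - g n → 0`. -/
lemma eqOn_of_convexOn_of_add_one {F H g : ℝ → ℝ}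
    (hF : ConvexOn ℝ (Ioi 0) F) (hH : ConvexOn ℝ (Ioi 0) H)
    (hFg : ∀ x > 0, F (x + 1) = F x + g x) (hHg : ∀ x > 0, H (x + 1) = H x + g x)
    (h1 : F 1 = H 1)
    (hg : Tendsto (fun n : ℕ => g (n + 2) - g (n + 1)) atTop (𝓝 0)) :
    EqOn F H (Ioi 0) := by
  have periodic : ∀ x > 0, ∀ n : ℕ, F (x + n) - H (x + n) = F x - H x := by
    intro x hx n
    induction n with
    | zero => simp
    | succ n ih =>
      have hxn : 0 < x + n := by positivity
      have e : x + (n + 1 : ℕ) = x + n + 1 := by push_cast; ring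
      rw [e, hFg _ hxn, hHg _ hxn, ← ih]
      ring
  have bounds : ∀ K : ℝ → ℝ, ConvexOn ℝ (Ioi 0) K → (∀ x > 0, K (x + 1) = K x + g x) →
      ∀ x : ℝ, 0 < x → x ≤ 1 → ∀ n : ℕ,
        x * g (n + 1) ≤ K (x + (n + 2 : ℕ)) - K (n + 2) ∧
          K (x + (n + 2 : ℕ)) - K (n + 2) ≤ x * g (n + 2) := by
    intro K hK hKg x hx hx1 n
    have hn : (0 : ℝ) ≤ n := n.cast_nonneg
    have e1 := hKg (n + 1) (by positivity)
    have e2 := hKg (n + 2) (by positivity)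
    rw [show (n : ℝ) + 1 + 1 = n + 2 by ring] at e1
    have lower := hK.slope_mono_adjacent (x := n + 1) (y := n + 2) (z := x + (n + 2 : ℕ))
      (mem_Ioi.2 (by positivity)) (mem_Ioi.2 (by positivity)) (by linarith)
      (by push_cast; linarith)
    have upper := hK.secant_mono (a := n + 2) (x := x + (n + 2 : ℕ)) (y := n + 2 + 1)
      (mem_Ioi.2 (by positivity)) (mem_Ioi.2 (by positivity)) (mem_Ioi.2 (by positivity))
      (by push_cast; linarith) (by linarith) (by push_cast; linarith)
    rw [show x + ((n + 2 : ℕ) : ℝ) - (n + 2) = x by push_cast; ring] at lower upper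
    rw [show (n : ℝ) + 2 - (n + 1) = 1 by ring, div_one, le_div_iff₀ hx] at lower
    rw [show (n : ℝ) + 2 + 1 - (n + 2) = 1 by ring, div_one, div_le_iff₀ hx] at upper
    constructor <;> nlinarith
  have unit : ∀ x : ℝ, 0 < x → x ≤ 1 → F x - H x = 0 := by
    intro x hx hx1
    have bound : ∀ n : ℕ, |F x - H x| ≤ x * (g (n + 2) - g (n + 1)) := by
      intro n
      have hFn := bounds F hF hFg x hx hx1 n
      have hHn := bounds H hH hHg x hx hx1 n
      have p := periodic x hx (n + 2)
      have q := periodic 1 one_pos (n + 1)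
      rw [show (1 : ℝ) + (n + 1 : ℕ) = n + 2 by push_cast; ring] at q
      rw [abs_le]
      constructor <;> linarith
    have lim : Tendsto (fun n : ℕ => x * (g (n + 2) - g (n + 1))) atTop (𝓝 0) := by
      simpa using hg.const_mul x
    exact abs_nonpos_iff.1 (ge_of_tendsto' lim bound)
  intro x hx
  rw [mem_Ioi] at hx
  obtain ⟨m, hm⟩ : ∃ m : ℕ, ⌈x⌉₊ = m + 1 := Nat.exists_eq_succ_of_ne_zero (Nat.ceil_pos.2 hx).ne'
  have hle : x ≤ m + 1 := by exact_mod_cast hm ▸ Nat.le_ceil x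
  have hlt : (m : ℝ) < x := Nat.lt_ceil.1 (by omega)
  have p := periodic (x - m) (by linarith) m
  rw [unit (x - m) (by linarith) (by linarith), sub_add_cancel] at p
  exact sub_eq_zero.1 p

/-- Two random variables whose moment generating functions are finite and agree on a neighbourhood
of `0` have the same law. -/
lemma map_eq_of_mgf_eqOn {Ω Ω' : Type*} {mΩ : MeasurableSpace Ω} {mΩ' : MeasurableSpace Ω'}
    {μ : Measure Ω} {ν : Measure Ω'} [IsFiniteMeasure μ] [IsFiniteMeasure ν]
    {X : Ω → ℝ} {Y : Ω' → ℝ} (hX : AEMeasurable X μ) (hY : AEMeasurable Y ν)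
    {a b : ℝ} (ha : a < 0) (hb : 0 < b)
    (hXint : Ioo a b ⊆ integrableExpSet X μ) (hYint : Ioo a b ⊆ integrableExpSet Y ν)
    (h : EqOn (mgf X μ) (mgf Y ν) (Ioo a b)) :
    μ.map X = ν.map Y := by
  set U : Set ℂ := {z | z.re ∈ Ioo a b}
  have hXan : AnalyticOnNhd ℂ (complexMGF X μ) U :=
    analyticOnNhd_complexMGF.mono fun z hz => interior_maximal hXint isOpen_Ioo hz
  have hYan : AnalyticOnNhd ℂ (complexMGF Y ν) U :=
    analyticOnNhd_complexMGF.mono fun z hz => interior_maximal hYint isOpen_Ioo hz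
  have hU : IsPreconnected U :=
    ((convex_Ioo a b).linear_preimage Complex.reLm).isPreconnected
  have hEq : EqOn (complexMGF X μ) (complexMGF Y ν) U := by
    refine hXan.eqOn_of_preconnected_of_frequently_eq hYan hU (z₀ := 0) (by simp [U, ha, hb]) ?_
    have hreal : ∃ᶠ x : ℝ in 𝓝[≠] 0, complexMGF X μ x = complexMGF Y ν x := by
      refine Eventually.frequently (eventually_nhdsWithin_of_eventually_nhds ?_)
      filter_upwards [Ioo_mem_nhds ha hb] with x hx
      rw [complexMGF_ofReal, complexMGF_ofReal, h hx]
    refine Tendsto.frequently (f := ((↑) : ℝ → ℂ)) ?_ hreal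
    refine tendsto_nhdsWithin_iff.2 ⟨?_, ?_⟩
    · exact (Complex.continuous_ofReal.tendsto' 0 0 (by simp)).mono_left nhdsWithin_le_nhds
    · filter_upwards [self_mem_nhdsWithin] with x hx
      simpa using hx
  refine Measure.ext_of_charFun (funext fun t => ?_)
  rw [← complexMGF_mul_I hX, ← complexMGF_mul_I hY]
  exact hEq (by simp [U, ha, hb])

/-- A law on `(0, ∞)` is determined by its Mellin transform on `(0, ∞)`. -/
lemma eq_of_integral_rpow_eq {μ ν : Measure ℝ} [IsFiniteMeasure μ] [IsFiniteMeasure ν]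
    (hμ : ∀ᵐ x ∂μ, 0 < x) (hν : ∀ᵐ x ∂ν, 0 < x)
    (hne : ∀ r > (0 : ℝ), ∫ x, x ^ (r - 1) ∂μ ≠ 0)
    (h : ∀ r > (0 : ℝ), ∫ x, x ^ (r - 1) ∂μ = ∫ x, x ^ (r - 1) ∂ν) :
    μ = ν := by
  have rpow_ae {ρ : Measure ℝ} (hρ : ∀ᵐ x ∂ρ, 0 < x) (t : ℝ) :
      (fun x => x ^ (t + 1 - 1)) =ᵐ[ρ] fun x => exp (t * log x) := by
    filter_upwards [hρ] with x hx
    rw [rpow_def_of_pos hx, add_sub_cancel_right, mul_comm]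
  have mgf_log {ρ : Measure ℝ} (hρ : ∀ᵐ x ∂ρ, 0 < x) (t : ℝ) :
      mgf log ρ t = ∫ x, x ^ (t + 1 - 1) ∂ρ := (integral_congr_ae (rpow_ae hρ t)).symm
  have mem_set {ρ : Measure ℝ} (hρ : ∀ᵐ x ∂ρ, 0 < x)
      (hρne : ∀ r > (0 : ℝ), ∫ x, x ^ (r - 1) ∂ρ ≠ 0) :
      Ioo (-1) 1 ⊆ integrableExpSet log ρ := fun t ht =>
    (Integrable.of_integral_ne_zero (hρne (t + 1) (by linarith [ht.1]))).congr (rpow_ae hρ t)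
  have key : μ.map log = ν.map log := by
    refine map_eq_of_mgf_eqOn measurable_log.aemeasurable measurable_log.aemeasurable
      (a := -1) (b := 1) (by norm_num) one_pos (mem_set hμ hne)
      (mem_set hν fun r hr => h r hr ▸ hne r hr) fun t ht => ?_
    rw [mgf_log hμ, mgf_log hν, h _ (by linarith [ht.1])]
  have map_exp_log {ρ : Measure ℝ} (hρ : ∀ᵐ x ∂ρ, 0 < x) : (ρ.map log).map exp = ρ := by
    rw [Measure.map_map measurable_exp measurable_log]
    conv_rhs => rw [← Measure.map_id (μ := ρ)]
    refine Measure.map_congr ?_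
    filter_upwards [hρ] with x hx using exp_log hx
  rw [← map_exp_log hμ, key, map_exp_log hν]

lemma integral_gammaPDFReal_eq_one {a r : ℝ} (ha : 0 < a) (hr : 0 < r) :
    ∫ x, gammaPDFReal a r x = 1 := by
  rw [integral_eq_lintegral_of_nonneg_ae (ae_of_all _ (gammaPDFReal_nonneg ha hr)) (by fun_prop)]
  exact (congrArg ENNReal.toReal (lintegral_gammaPDF_eq_one ha hr)).trans ENNReal.toReal_one

lemma betaPDFReal_nonneg {a b : ℝ} (ha : 0 < a) (hb : 0 < b) (x : ℝ) :
    0 ≤ betaPDFReal a b x := by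
  by_cases hx : 0 < x ∧ x < 1
  · exact (betaPDFReal_pos hx.1 hx.2 ha hb).le
  · simp [betaPDFReal, hx]

lemma integral_betaPDFReal_eq_one {a b : ℝ} (ha : 0 < a) (hb : 0 < b) :
    ∫ x, betaPDFReal a b x = 1 := by
  rw [integral_eq_lintegral_of_nonneg_ae (ae_of_all _ (betaPDFReal_nonneg ha hb)) (by fun_prop)]
  exact (congrArg ENNReal.toReal (lintegral_betaPDF_eq_one ha hb)).trans ENNReal.toReal_one

lemma integral_rpow_gammaMeasure_one {a s : ℝ} (ha : 0 < a) (has : 0 < a + s) :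
    ∫ x, x ^ s ∂gammaMeasure a 1 = Gamma (a + s) / Gamma a := by
  have hdens : ∫ x, x ^ s ∂gammaMeasure a 1 = ∫ x, gammaPDFReal a 1 x * x ^ s := by
    unfold gammaMeasure gammaPDF
    rw [integral_withDensity_eq_integral_toReal_smul (by fun_prop) (by simp)]
    simp [ENNReal.toReal_ofReal (gammaPDFReal_nonneg ha one_pos _)]
  have hshift : (fun x => gammaPDFReal a 1 x * x ^ s) =ᵐ[volume]
      fun x => Gamma (a + s) / Gamma a * gammaPDFReal (a + s) 1 x := by
    filter_upwards [Measure.ae_ne volume (0 : ℝ)] with x hx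
    rcases hx.lt_or_gt with hx | hx
    · simp [gammaPDFReal, hx.not_ge]
    · have h1 := (Gamma_pos_of_pos ha).ne'
      have h2 := (Gamma_pos_of_pos has).ne'
      simp only [gammaPDFReal, hx.le, if_true, one_rpow]
      rw [show a + s - 1 = a - 1 + s by ring, rpow_add hx]
      field_simp
  rw [hdens, integral_congr_ae hshift, integral_const_mul,
    integral_gammaPDFReal_eq_one has one_pos, mul_one]

lemma integral_rpow_betaMeasure {a b s : ℝ} (ha : 0 < a) (hb : 0 < b) (has : 0 < a + s) :
    ∫ x, x ^ s ∂betaMeasure a b = beta (a + s) b / beta a b := by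
  have hdens : ∫ x, x ^ s ∂betaMeasure a b = ∫ x, betaPDFReal a b x * x ^ s := by
    unfold betaMeasure betaPDF
    rw [integral_withDensity_eq_integral_toReal_smul (by fun_prop) (by simp)]
    simp [ENNReal.toReal_ofReal (betaPDFReal_nonneg ha hb _)]
  have hshift : (fun x => betaPDFReal a b x * x ^ s) =
      fun x => beta (a + s) b / beta a b * betaPDFReal (a + s) b x := by
    funext x
    by_cases hx : 0 < x ∧ x < 1
    · have h1 := (beta_pos ha hb).ne'
      have h2 := (beta_pos has hb).ne'
      simp only [betaPDFReal, hx, and_self, if_true]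
      rw [show a + s - 1 = a - 1 + s by ring, rpow_add hx.1]
      field_simp
    · simp [betaPDFReal, hx]
  rw [hdens, hshift, integral_const_mul, integral_betaPDFReal_eq_one has hb, mul_one]

lemma ae_pos_gammaMeasure (a r : ℝ) : ∀ᵐ x ∂gammaMeasure a r, 0 < x := by
  unfold gammaMeasure gammaPDF
  rw [ae_withDensity_iff (by fun_prop)]
  filter_upwards [Measure.ae_ne volume (0 : ℝ)] with x hx h
  refine lt_of_le_of_ne (not_lt.1 fun hlt => h ?_) hx.symm
  exact gammaPDF_of_neg hlt

lemma ae_pos_betaMeasure (a b : ℝ) : ∀ᵐ x ∂betaMeasure a b, 0 < x := by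
  unfold betaMeasure
  rw [ae_withDensity_iff (by unfold betaPDF; fun_prop)]
  exact ae_of_all _ fun x h => not_le.1 fun hle => h (betaPDF_eq_zero_of_nonpos hle)

lemma beta_one_left {c : ℝ} (hc : 0 < c) : beta 1 c = 1 / c := by
  have := (Gamma_pos_of_pos hc).ne'
  rw [beta, Gamma_one, add_comm, Gamma_add_one hc.ne']
  field_simp

lemma betaMeasure_one_left {c : ℝ} (hc : 0 < c) :
    betaMeasure 1 c = (volume.restrict (Ioo (0 : ℝ) 1)).withDensity
      (fun x => ENNReal.ofReal (c * (1 - x) ^ (c - 1))) := by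
  rw [← withDensity_indicator measurableSet_Ioo, betaMeasure]
  congr 1
  funext x
  by_cases hx : x ∈ Ioo (0 : ℝ) 1
  · rw [indicator_of_mem hx, betaPDF_of_pos_lt_one hx.1 hx.2, beta_one_left hc]
    simp
  · rw [indicator_of_notMem hx, betaPDF_eq, if_neg (mt mem_Ioo.2 hx), ENNReal.ofReal_zero]

/-- The log-convex solution of `f (r + 1) = (r + c) f r` with `f 1 = 1`. -/
lemma eq_Gamma_add_div_of_logConvex {c : ℝ} (hc : 0 < c) {f : ℝ → ℝ}
    (hpos : ∀ r > (0 : ℝ), 0 < f r) (h1 : f 1 = 1)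
    (heq : ∀ r > (0 : ℝ), f (r + 1) = (r + c) * f r)
    (hconv : ConvexOn ℝ (Ioi 0) (fun r => log (f r))) {r : ℝ} (hr : 0 < r) :
    f r = Gamma (c + r) / Gamma (c + 1) := by
  have hΓ : ∀ x > (0 : ℝ), 0 < Gamma (c + x) := fun x hx => Gamma_pos_of_pos (by linarith)
  have hconvΓ : ConvexOn ℝ (Ioi 0) (fun x => log (Gamma (c + x) / Gamma (c + 1))) := by
    have hshift : ConvexOn ℝ (Ioi 0) (fun x => log (Gamma (c + x))) :=
      (convexOn_log_Gamma.translate_right c).subset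
        (fun x (hx : 0 < x) => add_pos hc hx) (convex_Ioi 0)
    refine (hshift.add_const (-log (Gamma (c + 1)))).congr fun x hx => ?_
    simp only [Pi.add_apply]
    rw [log_div (hΓ x hx).ne' (hΓ 1 one_pos).ne', sub_eq_add_neg]
  have hlim : Tendsto (fun n : ℕ => log ((n : ℝ) + 2 + c) - log (n + 1 + c)) atTop (𝓝 0) := by
    have hc1 : Tendsto (fun n : ℕ => 1 + 1 / ((n : ℝ) + 1 + c)) atTop (𝓝 (1 + 0)) := by
      refine tendsto_const_nhds.add (tendsto_const_nhds.div_atTop ?_)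
      exact tendsto_atTop_add_const_right _ _
        (tendsto_atTop_add_const_right _ _ tendsto_natCast_atTop_atTop)
    have hlog := hc1.log (by norm_num)
    rw [add_zero, log_one] at hlog
    refine hlog.congr fun n => ?_
    rw [← log_div (by positivity) (by positivity)]
    congr 1
    field_simp
    ring
  have hlogeq := eqOn_of_convexOn_of_add_one (g := fun x => log (x + c)) hconv hconvΓ
    (fun x hx => by
      rw [heq x hx, log_mul (by linarith) (hpos x hx).ne', add_comm])
    (fun x hx => by
      have hx0 : 0 < c + x := by linarith
      have hxc : x + c ≠ 0 := by linarith
      rw [← add_assoc, Gamma_add_one hx0.ne', mul_div_assoc, add_comm c x,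
        log_mul hxc (div_pos (add_comm c x ▸ hΓ x hx) (hΓ 1 one_pos)).ne', add_comm])
    (by rw [h1, div_self (hΓ 1 one_pos).ne']) hlim
  exact log_injOn_pos (hpos r hr) (div_pos (hΓ r hr) (hΓ 1 one_pos)) (hlogeq hr)

end ProbabilityTheory

/-- For the exponential compound Poisson subordinator, `Φ(s) = s/(s+c)` with `c > 0`,
the Mellin transforms of the perpetuity and remainder (the unique log-convex normalized
solutions of the functional equations) are `I(r) = Γ(c+r)/Γ(c+1)` and
`R(r) = Γ(c+1)Γ(r)/Γ(c+r) = c B(r,c)`; hence the perpetuity is a gamma variable of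
parameter `c+1` and the remainder is a beta variable of parameters `(1,c)`. -/
theorem exponential_compound_poisson_perpetuity_remainder
    (c : ℝ) (hc : 0 < c)
    (I R : ℝ → ℝ)
    (hIpos : ∀ r > (0 : ℝ), 0 < I r) (hI1 : I 1 = 1)
    (hIeq : ∀ r > (0 : ℝ), I (r + 1) = (r / (r / (r + c))) * I r)
    (hIconv : ConvexOn ℝ (Ioi 0) (fun r => Real.log (I r)))
    (hRpos : ∀ r > (0 : ℝ), 0 < R r) (hR1 : R 1 = 1)
    (hReq : ∀ r > (0 : ℝ), R (r + 1) = (r / (r + c)) * R r)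
    (hRconv : ConvexOn ℝ (Ioi 0) (fun r => Real.log (R r)))
    -- random variables having these Mellin transforms
    {Ω : Type*} [MeasurableSpace Ω] (P : Measure Ω) [IsProbabilityMeasure P]
    (Iv Rv : Ω → ℝ) (hIvm : Measurable Iv) (hRvm : Measurable Rv)
    (hIvpos : ∀ᵐ ω ∂P, 0 < Iv ω) (hRvpos : ∀ᵐ ω ∂P, 0 < Rv ω)
    (hIv : ∀ r > (0 : ℝ), ∫ ω, Iv ω ^ (r - 1) ∂P = I r)
    (hRv : ∀ r > (0 : ℝ), ∫ ω, Rv ω ^ (r - 1) ∂P = R r) :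
    (∀ r > (0 : ℝ),
      I r = Real.Gamma (c + r) / Real.Gamma (c + 1) ∧
      R r = Real.Gamma (c + 1) * Real.Gamma r / Real.Gamma (c + r) ∧
      R r = c * (Real.Gamma r * Real.Gamma c / Real.Gamma (r + c))) ∧
    -- `Iv` is gamma with parameter `c+1` (rate 1)
    Measure.map Iv P = ProbabilityTheory.gammaMeasure (c + 1) 1 ∧
    -- `Rv` is beta with parameters `(1, c)`, with density `c (1-x)^{c-1}` on `(0,1)`
    Measure.map Rv P =
      (volume.restrict (Ioo (0 : ℝ) 1)).withDensity
        (fun x => ENNReal.ofReal (c * (1 - x) ^ (c - 1))) := by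

  have hI : ∀ r > (0 : ℝ), I r = Gamma (c + r) / Gamma (c + 1) := fun r hr =>
    ProbabilityTheory.eq_Gamma_add_div_of_logConvex hc hIpos hI1
      (fun x hx => by rw [hIeq x hx, div_div_cancel₀ (ne_of_gt hx)]) hIconv hr
  have hRI : EqOn (fun r => R r * I r) Gamma (Ioi 0) := by
    refine eq_Gamma_of_log_convex ((hRconv.add hIconv).congr fun x hx => ?_) (fun {y} hy => ?_)
      (fun {y} hy => mul_pos (hRpos y hy) (hIpos y hy)) (by simp [hR1, hI1])
    · simp [log_mul (hRpos x hx).ne' (hIpos x hx).ne']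
    · have hyc : y + c ≠ 0 := by positivity
      simp only [hReq y hy, hIeq y hy]
      field_simp
  have hΓ : ∀ r > (0 : ℝ), 0 < Gamma (c + r) := fun r hr => Gamma_pos_of_pos (by linarith)
  have hΓ1 := hΓ 1 one_pos
  have hR : ∀ r > (0 : ℝ), R r = Gamma (c + 1) * Gamma r / Gamma (c + r) := by
    intro r hr
    have hprod : R r * I r = Gamma r := hRI hr
    have hr0 := (hΓ r hr).ne'
    rw [← hprod, hI r hr]
    field_simp
  have hRbeta : ∀ r > (0 : ℝ), R r = c * (Gamma r * Gamma c / Gamma (r + c)) := by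
    intro r hr
    rw [hR r hr, Gamma_add_one hc.ne', add_comm r c]
    ring
  refine ⟨fun r hr => ⟨hI r hr, hR r hr, hRbeta r hr⟩, ?_, ?_⟩
  · have := Measure.isProbabilityMeasure_map (μ := P) hIvm.aemeasurable
    have := ProbabilityTheory.isProbabilityMeasure_gammaMeasure (a := c + 1) (by linarith) one_pos
    have hmap : ∀ r > (0 : ℝ), ∫ x, x ^ (r - 1) ∂(P.map Iv) = I r := fun r hr => by
      rw [integral_map hIvm.aemeasurable (Measurable.aestronglyMeasurable (by fun_prop)), hIv r hr]
    refine ProbabilityTheory.eq_of_integral_rpow_eq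
      ((ae_map_iff hIvm.aemeasurable measurableSet_Ioi).2 hIvpos)
      (ProbabilityTheory.ae_pos_gammaMeasure _ _)
      (fun r hr => hmap r hr ▸ (hIpos r hr).ne') fun r hr => ?_
    rw [hmap r hr, hI r hr,
      ProbabilityTheory.integral_rpow_gammaMeasure_one (by linarith) (by linarith)]
    congr 2
    ring
  · rw [← ProbabilityTheory.betaMeasure_one_left hc]
    have := Measure.isProbabilityMeasure_map (μ := P) hRvm.aemeasurable
    have := ProbabilityTheory.isProbabilityMeasureBeta one_pos hc
    have hmap : ∀ r > (0 : ℝ), ∫ x, x ^ (r - 1) ∂(P.map Rv) = R r := fun r hr => by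
      rw [integral_map hRvm.aemeasurable (Measurable.aestronglyMeasurable (by fun_prop)), hRv r hr]
    refine ProbabilityTheory.eq_of_integral_rpow_eq
      ((ae_map_iff hRvm.aemeasurable measurableSet_Ioi).2 hRvpos)
      (ProbabilityTheory.ae_pos_betaMeasure _ _)
      (fun r hr => hmap r hr ▸ (hRpos r hr).ne') fun r hr => ?_
    rw [hmap r hr, hRbeta r hr, ProbabilityTheory.integral_rpow_betaMeasure one_pos hc (by linarith),
      ProbabilityTheory.beta_one_left hc, add_sub_cancel, ProbabilityTheory.beta, div_div_eq_mul_div]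
    ring
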